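/- arXiv:2308.14467 — 3 statements merged into one kernel-verified Lean document; each statement's English description precedes it below -/
import Mathlib

section
/- Let χ be an uncountable cardinal, and let λ be a limit cardinal greater than χ such that cf(λ) ≠ cf(τ), where τ equals χ if χ is a limit cardinal, and the cardinal predecessor of χ otherwise. Let C be the set of all cardinals ν with χ ≤ ν < λ, and let g : C → C be a function with g(ν) ≥ ν for all ν ∈ C. Suppose there exists T ⊆ C with sup T = λ such that χ is a g(ν)-revision cardinal for all ν ∈ T. Then χ is a λ-revision cardinal. -/
/-!
Write `λ` as the union of an increasing chain of sets `S_a`, `a < λ`, each of size less than `λ`.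
Each `S_a` embeds into some `ν < λ` for which `χ` is a `ν`-revision cardinal, so some family of at
most `λ` sets of size less than `χ` covers the small subsets of `S_a`, fewer than `σ_a < χ` members
at a time. Let `X` be the union of these families over all `a`; it has size at most `λ`.

Since `cf λ ≠ cf τ`, cardinals below `τ` that increase with `a` are bounded below `τ`. If `χ` is a
limit, this replaces the `σ_a` by a single `σ < χ`; if `χ = τ⁺`, then `σ = τ` serves for all `a`.

A small set `b` that lies in no `S_a` has size at least `cf λ`. The pieces `b ∩ S_a`, for `a` in a
cofinal set of size `cf λ`, cover `b`, so `b` is covered by `cf λ · κ` members of `X`, where `κ`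
bounds the numbers needed for the pieces. If `χ` is a limit, then `cf λ · σ < χ` suffices. If
`χ = τ⁺`, the numbers needed are less than `τ` and increase with `a`, so that `κ < τ`, while
`cf λ ≤ τ` and `cf λ ≠ cf τ` give `cf λ < τ` because `cf λ` is regular.
-/

open Cardinal Set

universe u

/-- `X ⊆ 𝒫_{ρ₂}(ρ₁)` is a family witnessing the covering number `cov (ρ₁, ρ₂, ρ₃, ρ₄)`:
every `b ∈ 𝒫_{ρ₃}(ρ₁)` is covered by the union of fewer than `ρ₄` members of `X`. -/
def IsCovFamily (ρ₁ ρ₂ ρ₃ ρ₄ : Cardinal.{u}) (X : Set (Set ρ₁.out)) : Prop :=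
  (∀ x ∈ X, #x < ρ₂) ∧
    ∀ b : Set ρ₁.out, #b < ρ₃ →
      ∃ Q : Set (Set ρ₁.out), Q ⊆ X ∧ #Q < ρ₄ ∧ b ⊆ ⋃₀ Q

open scoped Classical in
/-- The covering number `cov (ρ₁, ρ₂, ρ₃, ρ₄)`: the least cardinality of a set
`X ⊆ 𝒫_{ρ₂}(ρ₁)` such that every `b ∈ 𝒫_{ρ₃}(ρ₁)` is included in the union of
fewer than `ρ₄` members of `X` (with value `2 ^ ρ₁` if no such family exists). -/
noncomputable def cov (ρ₁ ρ₂ ρ₃ ρ₄ : Cardinal.{u}) : Cardinal.{u} :=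
  if ∃ X, IsCovFamily ρ₁ ρ₂ ρ₃ ρ₄ X then
    sInf {κ | ∃ X, IsCovFamily ρ₁ ρ₂ ρ₃ ρ₄ X ∧ #X = κ}
  else 2 ^ ρ₁

/-- `χ` is a `λ`-revision cardinal: `cov (λ, χ, χ, σ) ≤ λ` for some cardinal `σ < χ`. -/
def IsRevision (χ lam : Cardinal.{u}) : Prop :=
  ∃ σ < χ, cov lam χ χ σ ≤ lam

/-- `c` is a limit cardinal: infinite and not the successor of any cardinal. -/
def IsLimitCard (c : Cardinal.{u}) : Prop :=
  ℵ₀ ≤ c ∧ ∀ μ : Cardinal.{u}, c ≠ Order.succ μ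

/-- `Z ⊆ 𝒫_τ(λ)` is a family witnessing `equal (λ, τ, ρ, σ)`: every `b ∈ [λ]^ρ` is
the union of fewer than `σ` members of `Z`. -/
def IsEqualFamily (lam tau rho sigma : Cardinal.{u}) (Z : Set (Set lam.out)) : Prop :=
  (∀ z ∈ Z, #z < tau) ∧
    ∀ b : Set lam.out, #b = rho →
      ∃ e : Set (Set lam.out), e ⊆ Z ∧ #e < sigma ∧ b = ⋃₀ e

open scoped Classical in
/-- `equal (λ, τ, ρ, σ)`: the least cardinality of a set `Z ⊆ 𝒫_τ(λ)` such that every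
`b ∈ [λ]^ρ` is the union of fewer than `σ` members of `Z`; `2 ^ λ` if no such `Z` exists. -/
noncomputable def equalCov (lam tau rho sigma : Cardinal.{u}) : Cardinal.{u} :=
  if ∃ Z, IsEqualFamily lam tau rho sigma Z then
    sInf {κ | ∃ Z, IsEqualFamily lam tau rho sigma Z ∧ #Z = κ}
  else 2 ^ lam

/-- `Z ⊆ 𝒫_τ(λ)` is a family witnessing `equal (λ, τ, <ρ, σ)`: every `b ∈ 𝒫_ρ(λ)` is
the union of fewer than `σ` members of `Z`. -/
def IsEqualLtFamily (lam tau rho sigma : Cardinal.{u}) (Z : Set (Set lam.out)) : Prop :=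
  (∀ z ∈ Z, #z < tau) ∧
    ∀ b : Set lam.out, #b < rho →
      ∃ e : Set (Set lam.out), e ⊆ Z ∧ #e < sigma ∧ b = ⋃₀ e

open scoped Classical in
/-- `equal (λ, τ, <ρ, σ)`: the least cardinality of a set `Z ⊆ 𝒫_τ(λ)` such that every
`b ∈ 𝒫_ρ(λ)` is the union of fewer than `σ` members of `Z`; `2 ^ λ` if no such `Z` exists. -/
noncomputable def equalLtCov (lam tau rho sigma : Cardinal.{u}) : Cardinal.{u} :=
  if ∃ Z, IsEqualLtFamily lam tau rho sigma Z then
    sInf {κ | ∃ Z, IsEqualLtFamily lam tau rho sigma Z ∧ #Z = κ}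
  else 2 ^ lam

/-- `b` is covered by at most `κ` members of the family `X`. The definition `IsCovFamily` asks for
fewer than `ρ₄` members; `≤` is used here because the number of members is what gets bounded
uniformly and multiplied. -/
def IsCoveredBy {L : Type u} (X : Set (Set L)) (κ : Cardinal.{u}) (b : Set L) : Prop :=
  ∃ Q ⊆ X, #Q ≤ κ ∧ b ⊆ ⋃₀ Q

/-- The localization of `IsCovFamily` to a subset `S` of an arbitrary type: only the small subsets
of `S` have to be covered. The members of `X` need not be subsets of `S`, so that one family can
serve for several `S`. -/
def IsCovFamilyOn {L : Type u} (S : Set L) (ρ₂ ρ₃ ρ₄ : Cardinal.{u}) (X : Set (Set L)) : Prop :=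
  (∀ x ∈ X, #x < ρ₂) ∧ ∀ b ⊆ S, #b < ρ₃ → ∃ κ < ρ₄, IsCoveredBy X κ b

section Cofinality

variable {A : Type u} [LinearOrder A]

theorem cof_eq_of_monotone_of_forall_exists_lt {B : Type u} [LinearOrder B] {f : A → B}
    (hf : Monotone f) (hlt : ∀ b, ∃ a, b < f a) : Order.cof A = Order.cof B := by
  apply le_antisymm
  · obtain ⟨D, hD, hDc⟩ := Order.exists_cof_eq B
    choose p hp using hlt
    have hpD : IsCofinal (p '' D) := fun a => by
      obtain ⟨d, hd, had⟩ := hD (f a)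
      exact ⟨p d, mem_image_of_mem p hd, (hf.reflect_lt (had.trans_lt (hp d))).le⟩
    exact hDc ▸ (Order.cof_le hpD).trans mk_image_le
  · obtain ⟨D, hD, hDc⟩ := Order.exists_cof_eq A
    have hfD : IsCofinal (f '' D) := fun b => by
      obtain ⟨a, ha⟩ := hlt b
      obtain ⟨d, hd, had⟩ := hD a
      exact ⟨f d, mem_image_of_mem f hd, ha.le.trans (hf had)⟩
    exact hDc ▸ (Order.cof_le hfD).trans mk_image_le

theorem exists_lt_forall_le_of_cof_ne {τ : Cardinal.{u}} (hcof : Order.cof A ≠ τ.ord.cof)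
    {f : A → Cardinal.{u}} (hf : Monotone f) (hlt : ∀ a, f a < τ) : ∃ κ < τ, ∀ a, f a ≤ κ := by
  by_contra! hub
  let F : A → τ.ord.ToType := fun a => Ordinal.ToType.mk ⟨(f a).ord, ord_lt_ord.2 (hlt a)⟩
  have hF : Monotone F := fun a a' haa =>
    Ordinal.ToType.mk.le_iff_le.2 (Subtype.mk_le_mk.2 (ord_le_ord.2 (hf haa)))
  refine hcof ((cof_eq_of_monotone_of_forall_exists_lt hF fun b => ?_).trans
    (Ordinal.cof_toType _))
  obtain ⟨⟨β, hβ⟩, rfl⟩ := Ordinal.ToType.mk.surjective b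
  obtain ⟨a, ha⟩ := hub β.card (lt_ord.1 hβ)
  exact ⟨a, Ordinal.ToType.mk.lt_iff_lt.2 (Subtype.mk_lt_mk.2 (lt_ord.2 ha))⟩

theorem exists_lt_forall_mem_of_antitone {τ : Cardinal.{u}} (hcof : Order.cof A ≠ τ.ord.cof)
    {R : A → Set Cardinal.{u}} (hR : Antitone R) (hup : ∀ a, IsUpperSet (R a))
    (hlt : ∀ a, ∃ κ < τ, κ ∈ R a) : ∃ κ < τ, ∀ a, κ ∈ R a := by
  have hne : ∀ a, (R a).Nonempty := fun a => (hlt a).imp fun _ h => h.2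
  obtain ⟨κ, hκ, hle⟩ := exists_lt_forall_le_of_cof_ne hcof (f := fun a => sInf (R a))
    (fun a a' haa => csInf_le_csInf' (hne a') (hR haa))
    (fun a => let ⟨_, hc, hcR⟩ := hlt a; (csInf_le' hcR).trans_lt hc)
  exact ⟨κ, hκ, fun a => hup a (hle a) (csInf_mem (hne a))⟩

theorem cof_lt_of_le_of_cof_ne [WellFoundedLT A] {τ : Cardinal.{u}} (hle : Order.cof A ≤ τ)
    (hcof : Order.cof A ≠ τ.ord.cof) : Order.cof A < τ :=
  hle.lt_of_ne fun h => hcof (by rw [← h, Order.cof_ord_cof])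

end Cofinality

theorem IsLimitCard.succ_lt {c κ : Cardinal.{u}} (hc : IsLimitCard c) (hκ : κ < c) :
    Order.succ κ < c :=
  (Order.succ_le_of_lt hκ).lt_of_ne (hc.2 κ).symm

theorem exists_monotone_iUnion_eq_univ_mk_lt {L : Type u} {lam : Cardinal.{u}} (hL : #L = lam)
    (hlam : ℵ₀ ≤ lam) :
    ∃ S : lam.ord.ToType → Set L, Monotone S ∧ ⋃ a, S a = Set.univ ∧ ∀ a, #(S a) < lam := by
  have : NoMaxOrder lam.ord.ToType := noMaxOrder hlam
  have hA : #lam.ord.ToType = lam := mk_ord_toType lam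
  obtain ⟨e⟩ : Nonempty (L ≃ lam.ord.ToType) := Cardinal.eq.1 (hL.trans hA.symm)
  refine ⟨fun a => e ⁻¹' Iio a, fun a a' haa => preimage_mono (Iio_subset_Iio haa),
    eq_univ_of_forall fun x => mem_iUnion.2 (exists_gt (e x)), fun a => ?_⟩
  calc #(e ⁻¹' Iio a) ≤ #(Iio a) := mk_preimage_of_injective e (Iio a) e.injective
    _ < #lam.ord.ToType := mk_Iio_lt a (by rw [hA, Ordinal.type_toType])
    _ = lam := hA

section Covering

variable {L : Type u} {S : Set L} {X : Set (Set L)} {κ ρ₁ ρ₂ ρ₃ ρ₄ : Cardinal.{u}}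

theorem IsCoveredBy.mono {κ' : Cardinal.{u}} {b b' : Set L} (hb : IsCoveredBy X κ b)
    (hκ : κ ≤ κ') (hbb : b' ⊆ b) : IsCoveredBy X κ' b' :=
  let ⟨Q, hQX, hQ, hbQ⟩ := hb
  ⟨Q, hQX, hQ.trans hκ, hbb.trans hbQ⟩

theorem IsCovFamilyOn.mono {S' : Set L} {ρ₄' : Cardinal.{u}} (hX : IsCovFamilyOn S ρ₂ ρ₃ ρ₄ X)
    (hS : S' ⊆ S) (hρ : ρ₄ ≤ ρ₄') : IsCovFamilyOn S' ρ₂ ρ₃ ρ₄' X :=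
  ⟨hX.1, fun b hbS hb =>
    let ⟨κ, hκ, hbκ⟩ := hX.2 b (hbS.trans hS) hb
    ⟨κ, hκ.trans_le hρ, hbκ⟩⟩

theorem IsCovFamilyOn.exists_isCoveredBy_inter {b : Set L} (hX : IsCovFamilyOn S ρ₂ ρ₃ ρ₄ X)
    (hb : #b < ρ₃) : ∃ κ < ρ₄, IsCoveredBy X κ (b ∩ S) :=
  hX.2 _ inter_subset_right ((mk_le_mk_of_subset inter_subset_left).trans_lt hb)

theorem exists_forall_isCovFamilyOn {ι : Type u} {S : ι → Set L} {lam : Cardinal.{u}}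
    (hlam : ℵ₀ ≤ lam) (hι : #ι ≤ lam)
    (h : ∀ a, ∃ X, IsCovFamilyOn (S a) ρ₂ ρ₃ ρ₄ X ∧ #X ≤ lam) :
    ∃ Z, (∀ a, IsCovFamilyOn (S a) ρ₂ ρ₃ ρ₄ Z) ∧ #Z ≤ lam := by
  choose X hX hXc using h
  refine ⟨⋃ a, X a, fun a => ⟨fun x hx => ?_, fun b hbS hb => ?_⟩, ?_⟩
  · obtain ⟨a', ha'⟩ := mem_iUnion.1 hx
    exact (hX a').1 x ha'
  · obtain ⟨κ, hκ, Q, hQX, hQ, hbQ⟩ := (hX a).2 b hbS hb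
    exact ⟨κ, hκ, Q, hQX.trans (subset_iUnion X a), hQ, hbQ⟩
  · calc #(⋃ a, X a) ≤ #ι * ⨆ a, #(X a) := mk_iUnion_le X
      _ ≤ lam * lam := by
        gcongr
        exact ciSup_le' hXc
      _ = lam := mul_eq_self hlam

theorem isCovFamilyOn_univ {X : Set (Set ρ₁.out)} :
    IsCovFamilyOn Set.univ ρ₂ ρ₃ ρ₄ X ↔ IsCovFamily ρ₁ ρ₂ ρ₃ ρ₄ X := by
  refine and_congr_right fun _ => ⟨fun h b hb => ?_, fun h b _ hb => ?_⟩
  · obtain ⟨κ, hκ, Q, hQX, hQ, hbQ⟩ := h b (subset_univ b) hb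
    exact ⟨Q, hQX, hQ.trans_lt hκ, hbQ⟩
  · obtain ⟨Q, hQX, hQ, hbQ⟩ := h b hb
    exact ⟨#Q, hQ, Q, hQX, le_rfl, hbQ⟩

theorem IsCovFamily.cov_le {X : Set (Set ρ₁.out)} (hX : IsCovFamily ρ₁ ρ₂ ρ₃ ρ₄ X) :
    cov ρ₁ ρ₂ ρ₃ ρ₄ ≤ #X := by
  rw [cov, if_pos ⟨X, hX⟩]
  exact csInf_le' ⟨X, hX, rfl⟩

theorem exists_isCovFamily_mk_eq_cov (h : cov ρ₁ ρ₂ ρ₃ ρ₄ < 2 ^ ρ₁) :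
    ∃ X, IsCovFamily ρ₁ ρ₂ ρ₃ ρ₄ X ∧ #X = cov ρ₁ ρ₂ ρ₃ ρ₄ := by
  unfold cov at h ⊢
  split_ifs at h ⊢ with hex
  · exact csInf_mem (s := {κ | ∃ X, IsCovFamily ρ₁ ρ₂ ρ₃ ρ₄ X ∧ #X = κ})
      (let ⟨X, hX⟩ := hex; ⟨#X, X, hX, rfl⟩)
  · exact absurd h (lt_irrefl _)

theorem isRevision_iff {χ lam : Cardinal.{u}} :
    IsRevision χ lam ↔ ∃ σ < χ, ∃ X, IsCovFamily lam χ χ σ X ∧ #X ≤ lam := by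
  refine exists_congr fun σ => and_congr_right fun _ => ⟨fun h => ?_, ?_⟩
  · -- the value `2 ^ λ` of `cov` in the absence of a covering family exceeds `λ`
    obtain ⟨X, hX, hXc⟩ := exists_isCovFamily_mk_eq_cov (h.trans_lt (cantor lam))
    exact ⟨X, hX, hXc.trans_le h⟩
  · rintro ⟨X, hX, hXc⟩
    exact hX.cov_le.trans hXc

theorem IsCovFamily.exists_isCovFamilyOn {X : Set (Set ρ₁.out)}
    (hX : IsCovFamily ρ₁ ρ₂ ρ₃ ρ₄ X) (hS : #S ≤ ρ₁) :
    ∃ Y : Set (Set L), IsCovFamilyOn S ρ₂ ρ₃ ρ₄ Y ∧ #Y ≤ #X := by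
  rw [← mk_out ρ₁] at hS
  obtain ⟨i⟩ := hS
  let pull : Set ρ₁.out → Set L := fun y => Subtype.val '' (i ⁻¹' y)
  refine ⟨pull '' X, ⟨?_, fun b hbS hb => ?_⟩, mk_image_le⟩
  · rintro _ ⟨x, hx, rfl⟩
    exact (mk_image_le.trans (mk_preimage_of_injective _ _ i.injective)).trans_lt (hX.1 x hx)
  · have hib : #(i '' (Subtype.val ⁻¹' b)) < ρ₃ :=
      (mk_image_le.trans (mk_preimage_of_injective _ _ Subtype.val_injective)).trans_lt hb
    obtain ⟨Q, hQX, hQ, hbQ⟩ := hX.2 _ hib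
    refine ⟨#Q, hQ, pull '' Q, image_mono hQX, mk_image_le, fun x hx => ?_⟩
    obtain ⟨y, hy, hxy⟩ := hbQ ⟨⟨x, hbS hx⟩, hx, rfl⟩
    exact ⟨pull y, mem_image_of_mem pull hy, ⟨x, hbS hx⟩, hxy, rfl⟩

theorem IsRevision.exists_isCovFamilyOn {χ ν : Cardinal.{u}} (h : IsRevision χ ν)
    (hS : #S ≤ ν) : ∃ σ < χ, ∃ X, IsCovFamilyOn S χ χ σ X ∧ #X ≤ ν := by
  obtain ⟨σ, hσ, X, hX, hXc⟩ := isRevision_iff.1 h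
  obtain ⟨Y, hY, hYX⟩ := hX.exists_isCovFamilyOn hS
  exact ⟨σ, hσ, Y, hY, hYX.trans hXc⟩

end Covering

section Chain

variable {L A : Type u} [LinearOrder A] {S : A → Set L} {X : Set (Set L)} {b : Set L}
  {χ lam σ τ ρ₂ ρ₃ ρ₄ : Cardinal.{u}}

theorem exists_subset_of_mk_lt_cof (hS : Monotone S) (hbS : b ⊆ ⋃ a, S a)
    (hb : #b < Order.cof A) : ∃ a, b ⊆ S a := by
  choose r hr using fun x : b => mem_iUnion.1 (hbS x.2)
  have hnc : ¬ IsCofinal (range r) := fun hc =>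
    (Order.cof_le hc).not_gt (mk_range_le.trans_lt hb)
  obtain ⟨a, ha⟩ := not_isCofinal_iff.1 hnc
  exact ⟨a, fun x hx => hS (ha _ ⟨⟨x, hx⟩, rfl⟩).le (hr ⟨x, hx⟩)⟩

theorem isCoveredBy_cof_mul_of_inter {κ : Cardinal.{u}} (hS : Monotone S) (hbS : b ⊆ ⋃ a, S a)
    (hb : ∀ a, IsCoveredBy X κ (b ∩ S a)) : IsCoveredBy X (Order.cof A * κ) b := by
  obtain ⟨C, hC, hCc⟩ := Order.exists_cof_eq A
  choose Q hQX hQ hbQ using hb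
  refine ⟨⋃ c : C, Q c, iUnion_subset fun c => hQX c, ?_, fun x hx => ?_⟩
  · calc #(⋃ c : C, Q c) ≤ #C * ⨆ c : C, #(Q c) := mk_iUnion_le _
      _ ≤ Order.cof A * κ := by
        rw [hCc]
        gcongr
        exact ciSup_le' fun c => hQ c
  · obtain ⟨a, ha⟩ := mem_iUnion.1 (hbS hx)
    obtain ⟨c, hc, hac⟩ := hC a
    obtain ⟨q, hq, hxq⟩ := hbQ c ⟨hx, hS hac ha⟩
    exact ⟨q, mem_iUnion.2 ⟨⟨c, hc⟩, hq⟩, hxq⟩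

theorem exists_lt_forall_isCoveredBy_inter (hS : Monotone S) (hcof : Order.cof A ≠ τ.ord.cof)
    (hb : ∀ a, ∃ κ < τ, IsCoveredBy X κ (b ∩ S a)) :
    ∃ κ < τ, ∀ a, IsCoveredBy X κ (b ∩ S a) :=
  exists_lt_forall_mem_of_antitone hcof (R := fun a => {κ | IsCoveredBy X κ (b ∩ S a)})
    (fun _ _ haa _ h => h.mono le_rfl (inter_subset_inter_right b (hS haa)))
    (fun _ _ _ hκ h => h.mono hκ Subset.rfl) hb

theorem exists_lt_forall_exists_isCovFamilyOn (hS : Monotone S)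
    (hcof : Order.cof A ≠ τ.ord.cof)
    (h : ∀ a, ∃ σ < τ, ∃ X, IsCovFamilyOn (S a) ρ₂ ρ₃ σ X ∧ #X ≤ lam) :
    ∃ σ < τ, ∀ a, ∃ X, IsCovFamilyOn (S a) ρ₂ ρ₃ σ X ∧ #X ≤ lam :=
  exists_lt_forall_mem_of_antitone hcof
    (R := fun a => {σ | ∃ X, IsCovFamilyOn (S a) ρ₂ ρ₃ σ X ∧ #X ≤ lam})
    (fun _ _ haa _ ⟨X, hX, hXc⟩ => ⟨X, hX.mono (hS haa) le_rfl, hXc⟩)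
    (fun _ _ _ hσ ⟨X, hX, hXc⟩ => ⟨X, hX.mono Subset.rfl hσ, hXc⟩) h

theorem isCovFamilyOn_iUnion_succ [WellFoundedLT A] [Nonempty A] [NoMaxOrder A]
    (hS : Monotone S) (hcof : Order.cof A ≠ τ.ord.cof)
    (hX : ∀ a, IsCovFamilyOn (S a) ρ₂ (Order.succ τ) τ X) :
    IsCovFamilyOn (⋃ a, S a) ρ₂ (Order.succ τ) τ X := by
  refine ⟨(hX (Classical.arbitrary A)).1, fun b hbS hb => ?_⟩
  rcases lt_or_ge #b (Order.cof A) with hbA | hAb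
  · obtain ⟨a, ha⟩ := exists_subset_of_mk_lt_cof hS hbS hbA
    exact (hX a).2 b ha hb
  · have hAτ : Order.cof A ≤ τ := hAb.trans (Order.lt_succ_iff.1 hb)
    obtain ⟨κ, hκ, hbκ⟩ := exists_lt_forall_isCoveredBy_inter hS hcof fun a =>
      (hX a).exists_isCoveredBy_inter hb
    exact ⟨Order.cof A * κ, mul_lt_of_lt (Order.aleph0_le_cof.trans hAτ)
      (cof_lt_of_le_of_cof_ne hAτ hcof) hκ, isCoveredBy_cof_mul_of_inter hS hbS hbκ⟩

theorem exists_isCovFamilyOn_iUnion_of_isLimitCard [Nonempty A] (hS : Monotone S)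
    (hχ : IsLimitCard χ) (hσ : σ < χ) (hX : ∀ a, IsCovFamilyOn (S a) ρ₂ χ σ X) :
    ∃ σ' < χ, IsCovFamilyOn (⋃ a, S a) ρ₂ χ σ' X := by
  have hX₂ : ∀ x ∈ X, #x < ρ₂ := (hX (Classical.arbitrary A)).1
  rcases lt_or_ge (Order.cof A) χ with hAχ | hχA
  · refine ⟨Order.succ (Order.cof A * σ), hχ.succ_lt (mul_lt_of_lt hχ.1 hAχ hσ), hX₂,
      fun b hbS hb => ⟨_, Order.lt_succ _, isCoveredBy_cof_mul_of_inter hS hbS fun a => ?_⟩⟩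
    obtain ⟨κ, hκ, hbκ⟩ := (hX a).exists_isCoveredBy_inter hb
    exact hbκ.mono hκ.le Subset.rfl
  · refine ⟨σ, hσ, hX₂, fun b hbS hb => ?_⟩
    obtain ⟨a, ha⟩ := exists_subset_of_mk_lt_cof hS hbS (hb.trans_le hχA)
    exact (hX a).2 b ha hb

theorem exists_isCovFamilyOn_iUnion [WellFoundedLT A] [Nonempty A] [NoMaxOrder A]
    (hlam : ℵ₀ ≤ lam) (hA : #A ≤ lam) (hS : Monotone S)
    (hτ : χ = Order.succ τ ∨ (IsLimitCard χ ∧ τ = χ)) (hcof : Order.cof A ≠ τ.ord.cof)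
    (h : ∀ a, ∃ σ < χ, ∃ X, IsCovFamilyOn (S a) ρ₂ χ σ X ∧ #X ≤ lam) :
    ∃ σ < χ, ∃ X, IsCovFamilyOn (⋃ a, S a) ρ₂ χ σ X ∧ #X ≤ lam := by
  rcases hτ with rfl | ⟨hχ, rfl⟩
  · have hτ : ∀ a, ∃ X, IsCovFamilyOn (S a) ρ₂ (Order.succ τ) τ X ∧ #X ≤ lam := fun a =>
      let ⟨_, hσ, X, hX, hXc⟩ := h a
      ⟨X, hX.mono Subset.rfl (Order.lt_succ_iff.1 hσ), hXc⟩
    obtain ⟨X, hX, hXc⟩ := exists_forall_isCovFamilyOn hlam hA hτ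
    exact ⟨τ, Order.lt_succ τ, X, isCovFamilyOn_iUnion_succ hS hcof hX, hXc⟩
  · obtain ⟨σ, hσ, hσX⟩ := exists_lt_forall_exists_isCovFamilyOn hS hcof h
    obtain ⟨X, hX, hXc⟩ := exists_forall_isCovFamilyOn hlam hA hσX
    obtain ⟨σ', hσ', hX'⟩ := exists_isCovFamilyOn_iUnion_of_isLimitCard hS hχ hσ hX
    exact ⟨σ', hσ', X, hX', hXc⟩

end Chain

theorem stmt3_general {χ lam τ : Cardinal.{u}}
    (hτ : χ = Order.succ τ ∨ (IsLimitCard χ ∧ τ = χ)) (hlam : ℵ₀ ≤ lam)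
    (hcof : lam.ord.cof ≠ τ.ord.cof) (h : ∀ μ < lam, ∃ ν ∈ Ico μ lam, IsRevision χ ν) :
    IsRevision χ lam := by
  have : NoMaxOrder lam.ord.ToType := noMaxOrder hlam
  have hA : #lam.ord.ToType = lam := mk_ord_toType lam
  have : Nonempty lam.ord.ToType := mk_ne_zero_iff.1 (hA.trans_ne (aleph0_pos.trans_le hlam).ne')
  obtain ⟨S, hS, hSuniv, hSlt⟩ := exists_monotone_iUnion_eq_univ_mk_lt (mk_out lam) hlam
  have hSfam : ∀ a, ∃ σ < χ, ∃ X, IsCovFamilyOn (S a) χ χ σ X ∧ #X ≤ lam := fun a => by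
    obtain ⟨ν, ⟨hSν, hν⟩, hrev⟩ := h _ (hSlt a)
    obtain ⟨σ, hσ, X, hX, hXc⟩ := hrev.exists_isCovFamilyOn hSν
    exact ⟨σ, hσ, X, hX, hXc.trans hν.le⟩
  obtain ⟨σ, hσ, X, hX, hXc⟩ := exists_isCovFamilyOn_iUnion hlam hA.le hS hτ
    (by rwa [Ordinal.cof_toType]) hSfam
  exact isRevision_iff.2 ⟨σ, hσ, X, isCovFamilyOn_univ.1 (hSuniv ▸ hX), hXc⟩

/-- Let `χ` be an uncountable cardinal, `λ` a limit cardinal greater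
than `χ` with `cf λ ≠ cf τ`, where `τ` is `χ` if `χ` is a limit cardinal and the
predecessor of `χ` otherwise.  Let `g` map each cardinal `ν` with `χ ≤ ν < λ` to a
cardinal `g ν` with `ν ≤ g ν` and `χ ≤ g ν < λ`.  If there is `T ⊆ [χ, λ)` with
`sup T = λ` such that `χ` is a `g ν`-revision cardinal for all `ν ∈ T`, then `χ` is a
`λ`-revision cardinal. -/
theorem stmt3 (χ lam τ : Cardinal.{u}) (hχ : ℵ₀ < χ)
    (hτ : χ = Order.succ τ ∨ (IsLimitCard χ ∧ τ = χ))
    (hlam : IsLimitCard lam) (hχlam : χ < lam)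
    (hcof : lam.ord.cof ≠ τ.ord.cof)
    (g : Cardinal.{u} → Cardinal.{u})
    (hg : ∀ ν : Cardinal.{u}, χ ≤ ν → ν < lam → (χ ≤ g ν ∧ g ν < lam) ∧ ν ≤ g ν)
    (T : Set Cardinal.{u}) (hT : ∀ ν ∈ T, χ ≤ ν ∧ ν < lam)
    (hTsup : sSup T = lam)
    (hrev : ∀ ν ∈ T, IsRevision χ (g ν)) :
    IsRevision χ lam := by
  refine stmt3_general hτ hlam.1 hcof fun μ hμ => ?_
  obtain ⟨ν, hν, hμν⟩ := exists_lt_of_lt_csSup' (hμ.trans_eq hTsup.symm)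
  obtain ⟨⟨-, hglt⟩, hgle⟩ := hg ν (hT ν hν).1 (hT ν hν).2
  exact ⟨g ν, ⟨hμν.le.trans hgle, hglt⟩, hrev ν hν⟩
end

section
/- Let χ be a weakly inaccessible cardinal (an uncountable regular limit cardinal) and let λ be a cardinal greater than χ. If χ⁺ is a λ-revision cardinal, then χ is a λ-revision cardinal. -/
/-!
Let `X` be a family of at most `λ` sets of size `≤ χ` such that each set of size `≤ χ` is covered
by fewer than `χ` members of `X`. There is a uniform bound `τ < χ` on the number of members
needed: otherwise choose, for each `τ < χ`, a set of size `≤ χ` that is not covered by fewer than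
`τ` members of `X`. The union of these sets still has size `≤ χ`, so it is covered by some `Q ⊆ X`
with `#Q < χ`, and as `χ` is a limit this contradicts the choice made for `τ = (#Q)⁺`.

It remains to shrink the members of `X`. Every infinite cardinal `χ` is a `χ`-revision cardinal,
as witnessed by the initial segments of an enumeration of length `χ`: each small set lies in a
single segment if `χ` is regular, and `cof χ < χ` segments exhaust `χ` if `χ` is singular.
Applying this inside every `x ∈ X` turns `X` into a family of at most `λ * χ = λ` sets of size
`< χ`.
-/

open Cardinal Set

universe u

/-- Since `ρ₁ < 2 ^ ρ₁`, the junk value of `cov` never interferes here. -/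
lemma cov_le_self_iff {ρ₁ ρ₂ ρ₃ ρ₄ : Cardinal.{u}} :
    cov ρ₁ ρ₂ ρ₃ ρ₄ ≤ ρ₁ ↔ ∃ X, IsCovFamily ρ₁ ρ₂ ρ₃ ρ₄ X ∧ #X ≤ ρ₁ := by
  unfold cov
  split_ifs with hex
  · have hne : {κ | ∃ X, IsCovFamily ρ₁ ρ₂ ρ₃ ρ₄ X ∧ #X = κ}.Nonempty :=
      hex.elim fun X hX => ⟨#X, X, hX, rfl⟩
    constructor
    · intro h
      obtain ⟨X, hX, hcard⟩ := csInf_mem hne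
      exact ⟨X, hX, hcard.le.trans h⟩
    · rintro ⟨X, hX, hcard⟩
      exact le_trans (csInf_le' ⟨X, hX, rfl⟩) hcard
  · exact ⟨fun h => absurd h (cantor ρ₁).not_ge, fun ⟨X, hX, _⟩ => absurd ⟨X, hX⟩ hex⟩

lemma IsLimitCard.isSuccPrelimit {χ : Cardinal.{u}} (hχ : IsLimitCard χ) :
    Order.IsSuccPrelimit χ :=
  Order.isSuccPrelimit_of_succ_ne fun μ => (hχ.2 μ).symm

namespace IsCovFamily

variable {ρ₁ ρ₂ ρ₃ ρ₄ : Cardinal.{u}} {X : Set (Set ρ₁.out)}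

lemma mono {ρ₃' ρ₄' : Cardinal.{u}} (hX : IsCovFamily ρ₁ ρ₂ ρ₃ ρ₄ X) (h₃ : ρ₃' ≤ ρ₃)
    (h₄ : ρ₄ ≤ ρ₄') : IsCovFamily ρ₁ ρ₂ ρ₃' ρ₄' X := by
  refine ⟨hX.1, fun b hb => ?_⟩
  obtain ⟨Q, hQX, hQ, hbQ⟩ := hX.2 b (hb.trans_le h₃)
  exact ⟨Q, hQX, hQ.trans_le h₄, hbQ⟩

lemma exists_lt_of_isSuccPrelimit (hX : IsCovFamily ρ₁ ρ₂ ρ₃ ρ₄ X) (h₃ : ρ₃.IsRegular)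
    (h₄₃ : ρ₄ < ρ₃) (h₄ : Order.IsSuccPrelimit ρ₄) :
    ∃ τ < ρ₄, IsCovFamily ρ₁ ρ₂ ρ₃ τ X := by
  by_contra! hno
  have hbad : ∀ τ < ρ₄, ∃ b : Set ρ₁.out, #b < ρ₃ ∧ ∀ Q ⊆ X, #Q < τ → ¬ b ⊆ ⋃₀ Q := by
    intro τ hτ
    by_contra! hgood
    exact hno τ hτ ⟨hX.1, hgood⟩
  -- The cardinals below `ρ₄` form a type in `Type (u + 1)`; we index the bad sets in `Type u` by
  -- the ordinals below `ρ₄.ord`, whose cardinalities exhaust them.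
  choose b hb hbbad using fun i : ρ₄.ord.ToType =>
    hbad (i.toOrd : Ordinal.{u}).card (lt_ord.1 i.toOrd.2)
  have hunion : #(⋃ i, b i) < ρ₃ :=
    (card_iUnion_lt_iff_forall_of_isRegular h₃ (by rwa [mk_ord_toType])).2 hb
  obtain ⟨Q, hQX, hQ, hbQ⟩ := hX.2 _ hunion
  let i : ρ₄.ord.ToType :=
    Ordinal.ToType.mk ⟨(Order.succ #Q).ord, ord_lt_ord.2 (h₄.succ_lt hQ)⟩
  have hi : (i.toOrd : Ordinal.{u}).card = Order.succ #Q := by simp [i]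
  exact hbbad i Q hQX (hi ▸ Order.lt_succ #Q) ((subset_iUnion b i).trans hbQ)

lemma exists_family_of_mk_le {α : Type u} {x : Set α} {Y : Set (Set ρ₁.out)}
    (hY : IsCovFamily ρ₁ ρ₂ ρ₃ ρ₄ Y) (hx : #x ≤ ρ₁) :
    ∃ Z : Set (Set α), #Z ≤ #Y ∧ (∀ z ∈ Z, #z < ρ₂) ∧
      ∀ b ⊆ x, #b < ρ₃ → ∃ R ⊆ Z, #R < ρ₄ ∧ b ⊆ ⋃₀ R := by
  rw [← mk_out ρ₁, Cardinal.le_def] at hx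
  obtain ⟨f⟩ := hx
  refine ⟨(fun y => Subtype.val '' (f ⁻¹' y)) '' Y, mk_image_le, ?_, fun b hbx hb => ?_⟩
  · rintro _ ⟨y, hy, rfl⟩
    exact (mk_image_le.trans (mk_preimage_of_injective _ _ f.injective)).trans_lt (hY.1 y hy)
  · have hfb : #(f '' (Subtype.val ⁻¹' b)) < ρ₃ :=
      (mk_image_le.trans (mk_preimage_of_injective _ _ Subtype.val_injective)).trans_lt hb
    obtain ⟨R, hRY, hR, hfR⟩ := hY.2 _ hfb
    refine ⟨_, image_mono hRY, mk_image_le.trans_lt hR, fun a ha => ?_⟩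
    obtain ⟨y, hyR, hay⟩ := hfR (mem_image_of_mem f (show ⟨a, hbx ha⟩ ∈ Subtype.val ⁻¹' b from ha))
    exact ⟨_, mem_image_of_mem _ hyR, ⟨a, hbx ha⟩, hay, rfl⟩

lemma trans {μ ν κ τ ρ : Cardinal.{u}} {Y : Set (Set μ.out)}
    (hX : IsCovFamily ρ₁ (Order.succ μ) ρ τ X) (hY : IsCovFamily μ ν ρ κ Y) :
    ∃ Z, IsCovFamily ρ₁ ν ρ (Order.succ (τ * κ)) Z ∧ #Z ≤ #X * #Y := by
  choose Z hZY hZ hZcov using fun x : X =>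
    hY.exists_family_of_mk_le (Order.lt_succ_iff.1 (hX.1 x x.2))
  refine ⟨⋃ x, Z x, ⟨fun z hz => ?_, fun b hb => ?_⟩, ?_⟩
  · obtain ⟨x, hzx⟩ := mem_iUnion.1 hz
    exact hZ x z hzx
  · obtain ⟨Q, hQX, hQ, hbQ⟩ := hX.2 b hb
    choose R hRZ hR hbR using fun x : Q =>
      hZcov ⟨x, hQX x.2⟩ (b ∩ x) inter_subset_right
        ((mk_le_mk_of_subset inter_subset_left).trans_lt hb)
    refine ⟨⋃ x, R x, iUnion_subset fun x => (hRZ x).trans (subset_iUnion Z _), ?_, ?_⟩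
    · rw [Order.lt_succ_iff]
      calc #(⋃ x, R x)
          ≤ sum fun x => #(R x) := mk_iUnion_le_sum_mk
        _ ≤ sum fun _ : Q => κ := sum_le_sum _ _ fun x => (hR x).le
        _ = #Q * κ := sum_const' _ _
        _ ≤ τ * κ := mul_le_mul_left hQ.le κ
    · intro a ha
      obtain ⟨x, hxQ, hax⟩ := hbQ ha
      exact sUnion_mono (subset_iUnion R ⟨x, hxQ⟩) (hbR ⟨x, hxQ⟩ ⟨ha, hax⟩)
  · calc #(⋃ x, Z x)
        ≤ sum fun x => #(Z x) := mk_iUnion_le_sum_mk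
      _ ≤ sum fun _ : X => #Y := sum_le_sum _ _ hZY
      _ = #X * #Y := sum_const' _ _

end IsCovFamily

/-- A well-order of `χ.out` in type `χ.ord`, encoded as an arbitrary bijection onto the
well-ordered type `χ.ord.ToType`; it serves to define initial segments in `χ.out`. -/
noncomputable def outEquivToType (χ : Cardinal.{u}) : χ.out ≃ χ.ord.ToType :=
  (Cardinal.eq.1 (χ.mk_out.trans χ.mk_ord_toType.symm)).some

/-- The closed initial segments of the well-order `outEquivToType χ`, the family witnessing
`cov (χ, χ, χ, σ) ≤ χ`. -/
def initialSegments (χ : Cardinal.{u}) : Set (Set χ.out) :=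
  range fun i : χ.ord.ToType => outEquivToType χ ⁻¹' Iic i

section initialSegments

variable {χ : Cardinal.{u}}

lemma mk_initialSegments_le : #(initialSegments χ) ≤ χ :=
  mk_range_le.trans_eq χ.mk_ord_toType

lemma mk_lt_of_mem_initialSegments (hχ : ℵ₀ ≤ χ) {s : Set χ.out} (hs : s ∈ initialSegments χ) :
    #s < χ := by
  obtain ⟨i, rfl⟩ := hs
  refine (mk_preimage_of_injective _ _ (Equiv.injective _)).trans_lt ?_
  simpa using mk_Iic_lt i (by simp) (by simpa using hχ)

lemma isCovFamily_initialSegments_of_isRegular (hχ : χ.IsRegular) :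
    IsCovFamily χ χ χ 2 (initialSegments χ) := by
  refine ⟨fun s hs => mk_lt_of_mem_initialSegments hχ.aleph0_le hs, fun b hb => ?_⟩
  let e := outEquivToType χ
  have hbdd : BddAbove (e '' b) := .of_not_isCofinal fun hcof => by
    have hle : χ ≤ #(e '' b) := by
      simpa only [Ordinal.cof_toType, hχ.cof_ord] using Order.cof_le hcof
    exact (hle.trans mk_image_le).not_gt hb
  obtain ⟨i, hi⟩ := hbdd
  refine ⟨{e ⁻¹' Iic i}, singleton_subset_iff.2 ⟨i, rfl⟩, by simp, ?_⟩
  rw [sUnion_singleton]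
  exact image_subset_iff.1 hi

lemma isCovFamily_initialSegments_succ_cof (hχ : ℵ₀ ≤ χ) (ρ : Cardinal.{u}) :
    IsCovFamily χ χ ρ (Order.succ χ.ord.cof) (initialSegments χ) := by
  refine ⟨fun s hs => mk_lt_of_mem_initialSegments hχ hs, fun b _ => ?_⟩
  let e := outEquivToType χ
  obtain ⟨S, hS, hScard⟩ := Order.exists_cof_eq χ.ord.ToType
  refine ⟨(fun i => e ⁻¹' Iic i) '' S, image_subset_range _ _, ?_, fun a _ => ?_⟩
  · rw [Order.lt_succ_iff, ← Ordinal.cof_toType, ← hScard]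
    exact mk_image_le
  · obtain ⟨i, hiS, hai⟩ := hS (e a)
    exact ⟨_, mem_image_of_mem _ hiS, hai⟩

end initialSegments

lemma isRevision_self {χ : Cardinal.{u}} (hχ : ℵ₀ ≤ χ) : IsRevision χ χ := by
  suffices h : ∃ σ < χ, IsCovFamily χ χ χ σ (initialSegments χ) by
    obtain ⟨σ, hσ, hcov⟩ := h
    exact ⟨σ, hσ, cov_le_self_iff.2 ⟨_, hcov, mk_initialSegments_le⟩⟩
  obtain hreg | hsing := isRegular_or_isSingular hχ
  · exact ⟨2, hreg.nat_lt 2, isCovFamily_initialSegments_of_isRegular hreg⟩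
  · exact ⟨_, hsing.isSuccLimit.succ_lt hsing.cof_ord_lt,
      isCovFamily_initialSegments_succ_cof hχ χ⟩

theorem stmt8_general (χ lam : Cardinal.{u}) (hlim : IsLimitCard χ) (hχlam : χ ≤ lam)
    (h : IsRevision (Order.succ χ) lam) : IsRevision χ lam := by
  obtain ⟨σ, hσ, hcov⟩ := h
  obtain ⟨X, hX, hXcard⟩ := cov_le_self_iff.1 hcov
  obtain ⟨τ, hτ, hXτ⟩ := (hX.mono le_rfl (Order.lt_succ_iff.1 hσ)).exists_lt_of_isSuccPrelimit
    (isRegular_succ hlim.1) (Order.lt_succ χ) hlim.isSuccPrelimit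
  obtain ⟨κ, hκ, hcovχ⟩ := isRevision_self hlim.1
  obtain ⟨Y, hY, hYcard⟩ := cov_le_self_iff.1 hcovχ
  obtain ⟨Z, hZ, hZcard⟩ := (hXτ.mono (Order.le_succ χ) le_rfl).trans hY
  have hZlam : #Z ≤ lam :=
    calc #Z ≤ #X * #Y := hZcard
      _ ≤ lam * lam := mul_le_mul' hXcard (hYcard.trans hχlam)
      _ = lam := mul_eq_self (hlim.1.trans hχlam)
  exact ⟨Order.succ (τ * κ), hlim.isSuccPrelimit.succ_lt (mul_lt_of_lt hlim.1 hτ hκ),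
    cov_le_self_iff.2 ⟨Z, hZ, hZlam⟩⟩

/-- Let `χ` be a weakly inaccessible cardinal (an uncountable regular
limit cardinal) and `λ > χ` a cardinal. If `χ⁺` is a `λ`-revision cardinal, then so is
`χ`. -/
theorem stmt8 (χ lam : Cardinal.{u}) (hunc : ℵ₀ < χ) (hreg : χ.IsRegular)
    (hlim : IsLimitCard χ) (hχlam : χ < lam)
    (h : IsRevision (Order.succ χ) lam) :
    IsRevision χ lam :=
  stmt8_general χ lam hlim hχlam.le h
end

section
/- Let σ, χ, λ be cardinals with cf(χ) < σ = cf(σ) < χ ≤ λ. Then equal(λ, χ, χ, σ) ≤ sup{equal(λ, ρ⁺, ρ, σ) : σ ≤ ρ < χ, ρ a cardinal}. -/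
/-!
If `λ < χ`, then `[λ]^χ` is empty and `equal (λ, χ, χ, σ) = 0`. Otherwise the bound comes from
gluing. Write `χ` as a union of `cf χ` many subsets `P a` with `σ ≤ |P a| < χ`. A set `b` of size
`χ` is then a union of `cf χ` many sets of sizes `|P a|`. Each of these is a union of fewer than `σ`
members of an optimal family for its size, so `b` is a union of fewer than `σ` members of the union
of the families, because `cf χ < cf σ`. The glued family has at most `cf χ` times the supremum many
members, and the supremum absorbs the factor `cf χ ≤ λ`: each `equal (λ, ρ⁺, ρ, σ)` with `σ ≤ ρ < χ`
is at least `λ`, since the members of a witnessing family have size at most `ρ < λ` and cover `λ`.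
-/

open Cardinal Set

universe u

section CardinalArithmetic

variable {A X : Type u} {σ χ κ : Cardinal.{u}}

lemma mk_iUnion_lt_of_lt_cof {s : A → Set X} (hσ : ℵ₀ ≤ σ) (hA : #A < σ.ord.cof)
    (hs : ∀ a, #(s a) < σ) : #(⋃ a, s a) < σ :=
  (mk_iUnion_le s).trans_lt <|
    mul_lt_of_lt hσ (hA.trans_le (Ordinal.cof_ord_le σ)) (iSup_lt_of_lt_cof_ord hA hs)

lemma aleph0_le_of_cof_lt_cof (hχ : χ ≠ 0) (h : χ.ord.cof < σ.ord.cof) : ℵ₀ ≤ σ := by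
  have hχ_cof : 1 ≤ χ.ord.cof := by
    rwa [Cardinal.one_le_iff_ne_zero, ne_eq, Ordinal.cof_eq_zero, ord_eq_zero]
  exact (Ordinal.aleph0_le_cof_iff.2 (hχ_cof.trans_lt h)).trans (Ordinal.cof_ord_le σ)

lemma exists_mem_and_mk_eq (hκ : κ ≠ 0) (hκX : κ ≤ #X) (x : X) : ∃ s : Set X, x ∈ s ∧ #s = κ := by
  classical
  obtain ⟨s, rfl⟩ := le_mk_iff_exists_set.1 hκX
  obtain ⟨y, hy⟩ : s.Nonempty := nonempty_coe_sort.1 (mk_ne_zero_iff.1 hκ)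
  exact ⟨Equiv.swap y x '' s, ⟨y, hy, Equiv.swap_apply_left y x⟩, mk_image_eq (Equiv.injective _)⟩

lemma exists_mk_eq_cof_iUnion_eq_univ (hχ : ℵ₀ ≤ χ) (hκ : κ < χ) :
    ∃ (A : Type u) (P : A → Set χ.ord.ToType), #A = χ.ord.cof ∧
      (∀ a, κ ≤ #(P a)) ∧ (∀ a, #(P a) < χ) ∧ ⋃ a, P a = Set.univ := by
  obtain ⟨A, hA_cofinal, hA_mk⟩ := Order.exists_cof_eq χ.ord.ToType
  obtain ⟨S, rfl⟩ := le_mk_iff_exists_set.1 (hκ.le.trans_eq (mk_ord_toType χ).symm)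
  -- Adding the fixed set `S` to each initial segment gives the lower bound on the sizes.
  refine ⟨A, fun a => Iic a.1 ∪ S, by rw [hA_mk, Ordinal.cof_toType],
    fun a => mk_le_mk_of_subset subset_union_right, fun a => ?_, eq_univ_of_forall fun x => ?_⟩
  · have hIic : #(Iic a.1) < χ := by simpa using mk_Iic_lt a.1 (by simp) (by simpa using hχ)
    exact (mk_union_le _ _).trans_lt (add_lt_of_lt hχ hIic hκ)
  · obtain ⟨a, ha, hxa⟩ := hA_cofinal x
    exact mem_iUnion.2 ⟨⟨a, ha⟩, Or.inl hxa⟩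

end CardinalArithmetic

section EqualFamily

variable {lam τ τ' ρ σ κ : Cardinal.{u}} {Z : Set (Set lam.out)}

lemma isEqualFamily_setOf_mk_eq (hρ : ρ < τ) (hσ : 1 < σ) :
    IsEqualFamily lam τ ρ σ {z | #z = ρ} :=
  ⟨fun _ hz => hz.trans_lt hρ, fun b hb =>
    ⟨{b}, singleton_subset_iff.2 hb, by rwa [mk_singleton], (sUnion_singleton b).symm⟩⟩

lemma isEqualFamily_empty_of_lt (h : lam < ρ) : IsEqualFamily lam τ ρ σ ∅ :=
  ⟨fun _ hz => hz.elim, fun b hb =>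
    absurd (hb.symm.trans_le ((mk_set_le b).trans_eq (mk_out lam))) h.not_ge⟩

lemma IsEqualFamily.mono (hZ : IsEqualFamily lam τ ρ σ Z) (h : τ ≤ τ') :
    IsEqualFamily lam τ' ρ σ Z :=
  ⟨fun z hz => (hZ.1 z hz).trans_le h, hZ.2⟩

lemma IsEqualFamily.sUnion_eq_univ (hZ : IsEqualFamily lam τ ρ σ Z) (hρ : ρ ≠ 0) (hρlam : ρ ≤ lam) :
    ⋃₀ Z = Set.univ := by
  refine eq_univ_of_forall fun x => ?_
  obtain ⟨b, hxb, hb⟩ := exists_mem_and_mk_eq hρ (hρlam.trans_eq (mk_out lam).symm) x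
  obtain ⟨e, heZ, -, rfl⟩ := hZ.2 b hb
  exact sUnion_subset_sUnion heZ hxb

lemma IsEqualFamily.le_mk (hZ : IsEqualFamily lam (Order.succ κ) ρ σ Z) (hρ : ρ ≠ 0)
    (hρlam : ρ ≤ lam) (hlam : ℵ₀ ≤ lam) (hκ : κ < lam) : lam ≤ #Z := by
  have hle : lam ≤ #Z * κ :=
    calc lam = #(⋃₀ Z) := by rw [hZ.sUnion_eq_univ hρ hρlam, mk_univ, mk_out]
      _ ≤ #Z * ⨆ z : Z, #z := mk_sUnion_le Z
      _ ≤ #Z * κ := by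
        gcongr
        exact ciSup_le' fun z => Order.lt_succ_iff.1 (hZ.1 z z.2)
  by_contra! hlt
  exact hle.not_gt (mul_lt_of_lt hlam hlt hκ)

lemma IsEqualFamily.iUnion {A X : Type u} {P : A → Set X} {Z : A → Set (Set lam.out)}
    (hσ : ℵ₀ ≤ σ) (hA : #A < σ.ord.cof) (hP : ⋃ a, P a = Set.univ)
    (hZ : ∀ a, IsEqualFamily lam τ #(P a) σ (Z a)) : IsEqualFamily lam τ #X σ (⋃ a, Z a) := by
  refine ⟨fun z hz => ?_, fun b hb => ?_⟩
  · obtain ⟨a, ha⟩ := mem_iUnion.1 hz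
    exact (hZ a).1 z ha
  · obtain ⟨f, hf, hfb⟩ : ∃ f : X → lam.out, Function.Injective f ∧ range f = b := by
      obtain ⟨g⟩ : Nonempty (X ≃ b) := Cardinal.eq.1 hb.symm
      exact ⟨Subtype.val ∘ g, Subtype.val_injective.comp g.injective, by
        rw [g.surjective.range_comp, Subtype.range_coe]⟩
    choose e heZ heσ he using fun a => (hZ a).2 (f '' P a) (mk_image_eq hf)
    refine ⟨⋃ a, e a, iUnion_mono heZ, mk_iUnion_lt_of_lt_cof hσ hA heσ, ?_⟩
    calc b = ⋃ a, f '' P a := by rw [← image_iUnion, hP, image_univ, hfb]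
      _ = ⋃₀ ⋃ a, e a := by rw [sUnion_iUnion, iUnion_congr he]

end EqualFamily

section EqualCov

variable {lam τ τ' ρ σ κ χ : Cardinal.{u}} {Z : Set (Set lam.out)}

lemma IsEqualFamily.equalCov_le (hZ : IsEqualFamily lam τ ρ σ Z) : equalCov lam τ ρ σ ≤ #Z := by
  rw [equalCov, if_pos ⟨Z, hZ⟩]
  exact csInf_le' ⟨Z, hZ, rfl⟩

lemma exists_isEqualFamily_mk_eq_equalCov (hρ : ρ < τ) (hσ : 1 < σ) :
    ∃ Z, IsEqualFamily lam τ ρ σ Z ∧ #Z = equalCov lam τ ρ σ := by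
  have hex : ∃ Z, IsEqualFamily lam τ ρ σ Z := ⟨_, isEqualFamily_setOf_mk_eq hρ hσ⟩
  rw [equalCov, if_pos hex]
  have hne : {κ | ∃ Z, IsEqualFamily lam τ ρ σ Z ∧ #Z = κ}.Nonempty :=
    hex.elim fun Z hZ => ⟨#Z, Z, hZ, rfl⟩
  exact csInf_mem hne

lemma equalCov_eq_zero_of_lt (h : lam < ρ) : equalCov lam τ ρ σ = 0 :=
  le_zero_iff.1 <| (isEqualFamily_empty_of_lt h).equalCov_le.trans_eq (mk_eq_zero _)

lemma equalCov_anti (hρ : ρ < τ) (hσ : 1 < σ) (h : τ ≤ τ') :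
    equalCov lam τ' ρ σ ≤ equalCov lam τ ρ σ := by
  obtain ⟨Z, hZ, hZ_mk⟩ := exists_isEqualFamily_mk_eq_equalCov (lam := lam) hρ hσ
  exact (hZ.mono h).equalCov_le.trans_eq hZ_mk

lemma le_equalCov_succ (hσ : 1 < σ) (hρ : ρ ≠ 0) (hρκ : ρ ≤ κ) (hlam : ℵ₀ ≤ lam) (hκ : κ < lam) :
    lam ≤ equalCov lam (Order.succ κ) ρ σ := by
  obtain ⟨Z, hZ, hZ_mk⟩ :=
    exists_isEqualFamily_mk_eq_equalCov (lam := lam) (Order.lt_succ_of_le hρκ) hσ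
  exact (hZ.le_mk hρ (hρκ.trans hκ.le) hlam hκ).trans_eq hZ_mk

lemma equalCov_le_mk_mul_iSup {A X : Type u} {P : A → Set X} (hσ : ℵ₀ ≤ σ) (hA : #A < σ.ord.cof)
    (hP : ⋃ a, P a = Set.univ) (hPτ : ∀ a, #(P a) < τ) :
    equalCov lam τ #X σ ≤ #A * ⨆ a, equalCov lam τ #(P a) σ := by
  choose Z hZ hZ_mk using fun a =>
    exists_isEqualFamily_mk_eq_equalCov (lam := lam) (hPτ a) (one_lt_aleph0.trans_le hσ)
  calc equalCov lam τ #X σ ≤ #(⋃ a, Z a) := (IsEqualFamily.iUnion hσ hA hP hZ).equalCov_le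
    _ ≤ #A * ⨆ a, #(Z a) := mk_iUnion_le Z
    _ = #A * ⨆ a, equalCov lam τ #(P a) σ := by simp only [hZ_mk]

lemma equalCov_succ_le_sSup (hσρ : σ ≤ ρ) (hρχ : ρ < χ) :
    equalCov lam (Order.succ ρ) ρ σ ≤ sSup {c : Cardinal.{u} |
      ∃ ρ : Cardinal.{u}, σ ≤ ρ ∧ ρ < χ ∧ c = equalCov lam (Order.succ ρ) ρ σ} := by
  refine le_csSup ?_ ⟨ρ, hσρ, hρχ, rfl⟩
  -- The supremum of an unbounded set of cardinals is the junk value `0`.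
  refine (bddAbove_of_small (s := (fun ρ => equalCov lam (Order.succ ρ) ρ σ) '' Iio χ)).mono ?_
  rintro c ⟨ρ, -, hρχ, rfl⟩
  exact mem_image_of_mem _ hρχ

end EqualCov

theorem stmt14_general {σ χ lam : Cardinal.{u}} (hcof : χ.ord.cof < σ.ord.cof) (hσχ : σ < χ) :
    equalCov lam χ χ σ ≤
      sSup {c : Cardinal.{u} |
        ∃ ρ : Cardinal.{u}, σ ≤ ρ ∧ ρ < χ ∧ c = equalCov lam (Order.succ ρ) ρ σ} := by
  obtain hlt | hχlam := lt_or_ge lam χ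
  · exact (equalCov_eq_zero_of_lt hlt).trans_le zero_le
  set S := sSup {c : Cardinal.{u} |
    ∃ ρ : Cardinal.{u}, σ ≤ ρ ∧ ρ < χ ∧ c = equalCov lam (Order.succ ρ) ρ σ}
  have hσ : ℵ₀ ≤ σ := aleph0_le_of_cof_lt_cof hσχ.ne_bot hcof
  have hσ_one : 1 < σ := one_lt_aleph0.trans_le hσ
  have hlam : ℵ₀ ≤ lam := hσ.trans (hσχ.le.trans hχlam)
  have hlamS : lam ≤ S :=
    (le_equalCov_succ hσ_one (aleph0_pos.trans_le hσ).ne' le_rfl hlam (hσχ.trans_le hχlam)).trans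
      (equalCov_succ_le_sSup le_rfl hσχ)
  obtain ⟨A, P, hA, hσP, hPχ, hP⟩ := exists_mk_eq_cof_iUnion_eq_univ (hσ.trans hσχ.le) hσχ
  have hPS (a : A) : equalCov lam χ #(P a) σ ≤ S :=
    (equalCov_anti (Order.lt_succ _) hσ_one (Order.succ_le_of_lt (hPχ a))).trans
      (equalCov_succ_le_sSup (hσP a) (hPχ a))
  have hAS : #A ≤ S := hA.trans_le ((Ordinal.cof_ord_le χ).trans (hχlam.trans hlamS))
  calc equalCov lam χ χ σ ≤ #A * ⨆ a, equalCov lam χ #(P a) σ := by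
        simpa only [mk_ord_toType] using equalCov_le_mk_mul_iSup hσ (hA.trans_lt hcof) hP hPχ
    _ ≤ S * S := mul_le_mul' hAS (ciSup_le' hPS)
    _ = S := mul_eq_self (hlam.trans hlamS)

/-- Let `σ, χ, λ` be cardinals with `cf χ < σ = cf σ < χ ≤ λ`. Then
`equal (λ, χ, χ, σ) ≤ sup {equal (λ, ρ⁺, ρ, σ) : σ ≤ ρ < χ}`. -/
theorem stmt14 (σ χ lam : Cardinal.{u}) (h1 : χ.ord.cof < σ) (h2 : σ.ord.cof = σ)
    (h3 : σ < χ) (h4 : χ ≤ lam) :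
    equalCov lam χ χ σ ≤
      sSup {c : Cardinal.{u} |
        ∃ ρ : Cardinal.{u}, σ ≤ ρ ∧ ρ < χ ∧ c = equalCov lam (Order.succ ρ) ρ σ} :=
  stmt14_general (h1.trans_eq h2.symm) h3
end
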